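/- Let α≥0, 1≤q<∞ and g∈L^∞(ℝ³₊). There is a constant C depending only on q, α and η such that for every 0<ε<1/100: ‖I_α(g)‖_{L^q(C+(1))} ≤ C ε^{1+1/q} ‖g‖_{L^∞(ℝ³₊)}, and ‖∂_{x₃} I_α(g)‖_{L^q(C+(1))} + ‖ x ↦ ∫_{ℝ³₊} g(y) η_ε(x−y*) dy ‖_{L^q(C+(1))} ≤ C ε^{1/q} ‖g‖_{L^∞(ℝ³₊)}, where C+(1)={x∈ℝ³: |x'|<1, 0<x₃<1}. -/

import Mathlib

/-!
All three functions are controlled pointwise on the cylinder by `K · M` times the indicator of the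
thin layer `{x₃ ≤ ε}`, whose intersection with `C₊(1)` has volume at most `4ε`; this produces the
factor `ε^{1/q}` (`eLpNorm_le_of_layer`).

The pointwise control comes from `halfConv η ε g p = ∫_{ℝ³₊} g(y) η_ε(y - p) dy`. As `η` is radial,
`η_ε(x'-y', x₃+y₃+ξ) = η_ε(y - p)` with `p = (x', -(x₃+ξ))`, so both the inner integral of `I_α`
and the third function are values of `halfConv` at points below the boundary plane. There

* `halfConv` is bounded by a multiple of `M` (`abs_halfConv_le`) and vanishes as soon as `p₃ < -ε`
  (`halfConv_eq_zero`), the support of `η_ε(· - p)` being then disjoint from the half space;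
* `halfConv` is Lipschitz in `p` with constant `O(M/ε)` (`abs_halfConv_sub_le`).

Hence the `ξ`-integral in `I_α` runs over `(0, ε]` only, which gains a factor `ε`: `I_α(g)` is
`O(εM)` and is Lipschitz on the closed half space with constant `O(M)`. A Lipschitz constant bounds
the norm of `fderiv` whether or not the function is differentiable, which gives the estimate of
`∂₃ I_α(g)` without differentiating under the integral sign.
-/

open MeasureTheory Set Filter

noncomputable section

/-- ℝ³ with the Euclidean structure. -/
abbrev V3 : Type := EuclideanSpace ℝ (Fin 3)

/-- The `j`-th coordinate vector of ℝ³. -/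
def e3 (j : Fin 3) : V3 := EuclideanSpace.single j (1 : ℝ)

/-- The partial derivative `∂_j f` of a scalar function on ℝ³. -/
def pd (j : Fin 3) (f : V3 → ℝ) (x : V3) : ℝ := fderiv ℝ f x (e3 j)

/-- The point `(a,b,c)` of ℝ³. -/
def mk3 (a b c : ℝ) : V3 := (WithLp.equiv 2 (Fin 3 → ℝ)).symm ![a, b, c]

/-- The reflected point `x* = (x', -x₃)`. -/
def refl3 (x : V3) : V3 := mk3 (x 0) (x 1) (-(x 2))

/-- Signs for the even-even-odd extension. -/
def sgn3 (i : Fin 3) : ℝ := if i = 2 then -1 else 1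

/-- The open upper half space ℝ³₊. -/
def Hplus : Set V3 := {x : V3 | 0 < x 2}

/-- The half cylinder C₊(R) = B'(R) × (0,R). -/
def Cplus (R : ℝ) : Set V3 := {x : V3 | (x 0)^2 + (x 1)^2 < R^2 ∧ 0 < x 2 ∧ x 2 < R}

/-- The full cylinder C(R) = B'(R) × (-R,R). -/
def Ccyl (R : ℝ) : Set V3 := {x : V3 | (x 0)^2 + (x 1)^2 < R^2 ∧ -R < x 2 ∧ x 2 < R}

/-- The flat boundary disk Γ(R) = B'(R) × {0}. -/
def Gam (R : ℝ) : Set V3 := {x : V3 | (x 0)^2 + (x 1)^2 < R^2 ∧ x 2 = 0}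

/-- The time interval (-R², 0), so that Q₊(R) = C₊(R) × TI R. -/
def TI (R : ℝ) : Set ℝ := Ioo (-(R^2)) 0

/-- Divergence of a vector field on ℝ³. -/
def vdiv (v : V3 → V3) (x : V3) : ℝ := ∑ j, pd j (fun y => v y j) x

/-- Laplacian of a scalar function on ℝ³. -/
def lap (f : V3 → ℝ) (x : V3) : ℝ := ∑ j, pd j (fun y => pd j f y) x

/-- Curl of a vector field on ℝ³. -/
def curl3 (v : V3 → V3) (x : V3) : V3 :=
  mk3 (pd 1 (fun y => v y 2) x - pd 2 (fun y => v y 1) x)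
      (pd 2 (fun y => v y 0) x - pd 0 (fun y => v y 2) x)
      (pd 0 (fun y => v y 1) x - pd 1 (fun y => v y 0) x)

/-- Membership in the mixed Lebesgue space L^r(I; L^q(Ω)):
joint measurability, a.e.-in-time q-integrability in space, and
r/q-integrability in time of the spatial integrals. -/
def MemLqr {X E : Type*} [MeasureSpace X] [NormedAddCommGroup E]
    (q r : ℝ) (Ω : Set X) (I : Set ℝ) (u : ℝ → X → E) : Prop :=
  AEStronglyMeasurable (fun p : ℝ × X => u p.1 p.2)
      ((volume.restrict I).prod (volume.restrict Ω)) ∧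
  (∀ᵐ t ∂(volume.restrict I), IntegrableOn (fun x => ‖u t x‖ ^ q) Ω) ∧
  IntegrableOn (fun t => (∫ x in Ω, ‖u t x‖ ^ q) ^ (r / q)) I

/-- The mixed Lebesgue norm ‖u‖_{L^{q,r}(Ω × I)} = ‖ t ↦ ‖u(·,t)‖_{L^q(Ω)} ‖_{L^r(I)}. -/
def LqrNorm {X E : Type*} [MeasureSpace X] [NormedAddCommGroup E]
    (q r : ℝ) (Ω : Set X) (I : Set ℝ) (u : ℝ → X → E) : ℝ :=
  (∫ t in I, (∫ x in Ω, ‖u t x‖ ^ q) ^ (r / q)) ^ (1 / r)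

/-- Test fields for very weak solutions: divergence-free C^{2,1} fields compactly
supported in Q₊(R) ∪ Σ_R satisfying the Navier boundary condition (3.3). -/
structure IsTestVW (R α : ℝ) (Φ : ℝ → V3 → V3) : Prop where
  smooth : ContDiff ℝ 2 (fun p : ℝ × V3 => Φ p.1 p.2)
  supp : tsupport (fun p : ℝ × V3 => Φ p.1 p.2) ⊆ (TI R) ×ˢ (Cplus R ∪ Gam R)
  divfree : ∀ t x, vdiv (Φ t) x = 0
  bc12 : ∀ (t : ℝ) (x : V3), x 2 = 0 → ∀ k : Fin 3, k ≠ 2 →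
    pd 2 (fun y => Φ t y k) x - α * Φ t x k = 0
  bc3 : ∀ (t : ℝ) (x : V3), x 2 = 0 → Φ t x 2 = 0

/-- Test fields for weak solutions: divergence-free C¹ fields compactly supported
in Q₊(R) ∪ Σ_R with vanishing normal component on the flat boundary. -/
structure IsTestW (R : ℝ) (Φ : ℝ → V3 → V3) : Prop where
  smooth : ContDiff ℝ 1 (fun p : ℝ × V3 => Φ p.1 p.2)
  supp : tsupport (fun p : ℝ × V3 => Φ p.1 p.2) ⊆ (TI R) ×ˢ (Cplus R ∪ Gam R)
  divfree : ∀ t x, vdiv (Φ t) x = 0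
  bc3 : ∀ (t : ℝ) (x : V3), x 2 = 0 → Φ t x 2 = 0

/-- Test fields for weak solution pairs: C¹ fields compactly supported
in Q₊(R) ∪ Σ_R with vanishing normal component on the flat boundary
(not necessarily divergence free). -/
structure IsTestP (R : ℝ) (Φ : ℝ → V3 → V3) : Prop where
  smooth : ContDiff ℝ 1 (fun p : ℝ × V3 => Φ p.1 p.2)
  supp : tsupport (fun p : ℝ × V3 => Φ p.1 p.2) ⊆ (TI R) ×ˢ (Cplus R ∪ Gam R)
  bc3 : ∀ (t : ℝ) (x : V3), x 2 = 0 → Φ t x 2 = 0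

/-- Smooth scalar test functions compactly supported in the interior of Q₊(R). -/
def IsIntTest (R : ℝ) (χ : ℝ → V3 → ℝ) : Prop :=
  ContDiff ℝ (⊤ : ℕ∞) (fun p : ℝ × V3 => χ p.1 p.2) ∧
  tsupport (fun p : ℝ × V3 => χ p.1 p.2) ⊆ (TI R) ×ˢ (Cplus R)

/-- `du` is the (spatial) weak gradient of `u` in Q₊(R): (du)_{ij} = ∂_j u_i. -/
def IsWeakGrad (R : ℝ) (u : ℝ → V3 → V3) (du : ℝ → V3 → Fin 3 → Fin 3 → ℝ) : Prop :=
  ∀ χ, IsIntTest R χ → ∀ i j : Fin 3,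
    (∫ t in TI R, ∫ x in Cplus R, du t x i j * χ t x) =
      -(∫ t in TI R, ∫ x in Cplus R, u t x i * pd j (χ t) x)

/-- `u(·,t)` is divergence free in C₊(R) with vanishing normal trace on the flat
boundary, expressed via (2.10): ∫ u·∇Ψ = 0 for all Ψ ∈ C¹_c(C₊(R) ∪ Γ_R). -/
def NormalBC (R : ℝ) (u : ℝ → V3 → V3) : Prop :=
  ∀ᵐ t ∂(volume.restrict (TI R)), ∀ Ψ : V3 → ℝ, ContDiff ℝ 1 Ψ →
    tsupport Ψ ⊆ Cplus R ∪ Gam R →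
    (∫ x in Cplus R, ∑ j, u t x j * pd j Ψ x) = 0

/-- Very weak solution of the Stokes system in Q₊(R) with Navier boundary
condition with friction coefficient α on the flat boundary (Definition 2.4). -/
structure IsVeryWeakSol (R α : ℝ) (u f : ℝ → V3 → V3)
    (F : ℝ → V3 → Fin 3 → Fin 3 → ℝ) : Prop where
  intu : IntegrableOn (fun p : ℝ × V3 => u p.1 p.2) ((TI R) ×ˢ (Cplus R))
  intf : IntegrableOn (fun p : ℝ × V3 => f p.1 p.2) ((TI R) ×ˢ (Cplus R))
  intF : IntegrableOn (fun p : ℝ × V3 => F p.1 p.2) ((TI R) ×ˢ (Cplus R))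
  normal : NormalBC R u
  eq : ∀ Φ, IsTestVW R α Φ →
    -(∫ t in TI R, ∫ x in Cplus R,
        ∑ i, u t x i * (deriv (fun s => Φ s x i) t + lap (fun y => Φ t y i) x)) =
      ∫ t in TI R, ∫ x in Cplus R,
        ((∑ i, f t x i * Φ t x i) - ∑ i, ∑ j, F t x i j * pd j (fun y => Φ t y i) x)

/-- Weak solution of the Stokes system in Q₊(R) with Navier boundary condition
with friction coefficient α on the flat boundary (Definition 2.5); `du` is the
weak spatial gradient of `u`.  The boundary term α ∬_Σ u_k Φ_k is expressed,
via the Gauss–Green formula ∬_Σ u_k Φ_k = -∬_{Q₊} ∂₃(u_k Φ_k), in terms of the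
weak gradient, which avoids invoking a trace operator. -/
structure IsWeakSol (R α : ℝ) (u : ℝ → V3 → V3) (du : ℝ → V3 → Fin 3 → Fin 3 → ℝ)
    (f : ℝ → V3 → V3) (F : ℝ → V3 → Fin 3 → Fin 3 → ℝ) : Prop where
  intu : IntegrableOn (fun p : ℝ × V3 => u p.1 p.2) ((TI R) ×ˢ (Cplus R))
  intdu : IntegrableOn (fun p : ℝ × V3 => du p.1 p.2) ((TI R) ×ˢ (Cplus R))
  intf : IntegrableOn (fun p : ℝ × V3 => f p.1 p.2) ((TI R) ×ˢ (Cplus R))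
  intF : IntegrableOn (fun p : ℝ × V3 => F p.1 p.2) ((TI R) ×ˢ (Cplus R))
  grad : IsWeakGrad R u du
  normal : NormalBC R u
  eq : ∀ Φ, IsTestW R Φ →
    ((∫ t in TI R, ∫ x in Cplus R,
        (-(∑ i, u t x i * deriv (fun s => Φ s x i) t)
          + ∑ i, ∑ j, du t x i j * pd j (fun y => Φ t y i) x))
      - α * ∑ k : Fin 2, ∫ t in TI R, ∫ x in Cplus R,
          (du t x (Fin.castSucc k) 2 * Φ t x (Fin.castSucc k)
            + u t x (Fin.castSucc k) * pd 2 (fun y => Φ t y (Fin.castSucc k)) x))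
    = ∫ t in TI R, ∫ x in Cplus R,
        ((∑ i, f t x i * Φ t x i) - ∑ i, ∑ j, F t x i j * pd j (fun y => Φ t y i) x)

/-- Weak solution pair (u, pr) of the Stokes system in Q₊(R) with Navier
boundary condition with friction coefficient α on the flat boundary
(Definition 2.6); `du` is the weak spatial gradient of `u`, and the boundary
term is expressed as in `IsWeakSol`. -/
structure IsWeakSolPair (R α : ℝ) (u : ℝ → V3 → V3) (du : ℝ → V3 → Fin 3 → Fin 3 → ℝ)
    (pr : ℝ → V3 → ℝ) (f : ℝ → V3 → V3) (F : ℝ → V3 → Fin 3 → Fin 3 → ℝ) : Prop where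
  intu : IntegrableOn (fun p : ℝ × V3 => u p.1 p.2) ((TI R) ×ˢ (Cplus R))
  intdu : IntegrableOn (fun p : ℝ × V3 => du p.1 p.2) ((TI R) ×ˢ (Cplus R))
  intpr : IntegrableOn (fun p : ℝ × V3 => pr p.1 p.2) ((TI R) ×ˢ (Cplus R))
  intf : IntegrableOn (fun p : ℝ × V3 => f p.1 p.2) ((TI R) ×ˢ (Cplus R))
  intF : IntegrableOn (fun p : ℝ × V3 => F p.1 p.2) ((TI R) ×ˢ (Cplus R))
  grad : IsWeakGrad R u du
  normal : NormalBC R u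
  eq : ∀ Φ, IsTestP R Φ →
    ((∫ t in TI R, ∫ x in Cplus R,
        (-(∑ i, u t x i * deriv (fun s => Φ s x i) t)
          + (∑ i, ∑ j, du t x i j * pd j (fun y => Φ t y i) x)
          - pr t x * vdiv (Φ t) x))
      - α * ∑ k : Fin 2, ∫ t in TI R, ∫ x in Cplus R,
          (du t x (Fin.castSucc k) 2 * Φ t x (Fin.castSucc k)
            + u t x (Fin.castSucc k) * pd 2 (fun y => Φ t y (Fin.castSucc k)) x))
    = ∫ t in TI R, ∫ x in Cplus R,
        ((∑ i, f t x i * Φ t x i) - ∑ i, ∑ j, F t x i j * pd j (fun y => Φ t y i) x)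

/-- A mollifier: smooth, radial, supported in the unit ball, with integral 1. -/
def IsMollifier (η : V3 → ℝ) : Prop :=
  ContDiff ℝ (⊤ : ℕ∞) η ∧ tsupport η ⊆ Metric.closedBall 0 1 ∧
  (∀ x y : V3, ‖x‖ = ‖y‖ → η x = η y) ∧ (∫ x : V3, η x) = 1

/-- Rescaled mollifier η_ε(x) = ε⁻³ η(x/ε). -/
def mol (η : V3 → ℝ) (ε : ℝ) (x : V3) : ℝ := (ε ^ 3)⁻¹ * η (ε⁻¹ • x)

/-- Kernel η_ε⁺(x,y) = η_ε(x-y) + η_ε(x-y*). -/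
def molP (η : V3 → ℝ) (ε : ℝ) (x y : V3) : ℝ := mol η ε (x - y) + mol η ε (x - refl3 y)

/-- Kernel η_ε⁻(x,y) = η_ε(x-y) - η_ε(x-y*). -/
def molM (η : V3 → ℝ) (ε : ℝ) (x y : V3) : ℝ := mol η ε (x - y) - mol η ε (x - refl3 y)

/-- The mollified even extension E⁺(g). -/
def Ep (η : V3 → ℝ) (ε : ℝ) (g : V3 → ℝ) (x : V3) : ℝ := ∫ y in Hplus, g y * molP η ε x y

/-- The mollified odd extension E⁻(g). -/
def Em (η : V3 → ℝ) (ε : ℝ) (g : V3 → ℝ) (x : V3) : ℝ := ∫ y in Hplus, g y * molM η ε x y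

/-- The operator I_α of (2.13). -/
def Ialpha (η : V3 → ℝ) (ε α : ℝ) (g : V3 → ℝ) (x : V3) : ℝ :=
  ∫ ξ in Ioi (0:ℝ), Real.exp (-(α * ξ)) *
    ∫ y in Hplus, g y * mol η ε (mk3 (x 0 - y 0) (x 1 - y 1) (x 2 + y 2 + ξ))

/-- The heat kernel Γ(x,t) = (4πt)^{-3/2} exp(-|x|²/(4t)) on ℝ³. -/
def heatK (x : V3) (t : ℝ) : ℝ :=
  (4 * Real.pi * t) ^ (-(3:ℝ)/2) * Real.exp (-‖x‖^2 / (4*t))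

/-- The even-even-odd extension of a (time-dependent) vector field on the
half space to all of ℝ³. -/
def extV (u : ℝ → V3 → V3) : ℝ → V3 → V3 :=
  fun t x => if 0 ≤ x 2 then u t x
    else mk3 (u t (refl3 x) 0) (u t (refl3 x) 1) (-(u t (refl3 x) 2))

/-- The corresponding extension of a (time-dependent) matrix field,
with signs ε_i ε_j. -/
def extM (F : ℝ → V3 → Fin 3 → Fin 3 → ℝ) : ℝ → V3 → Fin 3 → Fin 3 → ℝ :=
  fun t x i j => if 0 ≤ x 2 then F t x i j else sgn3 i * sgn3 j * F t (refl3 x) i j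

/-- The extension of a (time-dependent) scalar field, even in x₃. -/
def extS (pr : ℝ → V3 → ℝ) : ℝ → V3 → ℝ :=
  fun t x => if 0 ≤ x 2 then pr t x else pr t (refl3 x)

/-! ### Geometry of ℝ³ -/

@[simp] lemma mk3_apply_zero (a b c : ℝ) : mk3 a b c 0 = a := rfl

@[simp] lemma mk3_apply_one (a b c : ℝ) : mk3 a b c 1 = b := rfl

@[simp] lemma mk3_apply_two (a b c : ℝ) : mk3 a b c 2 = c := rfl

/-- The point `(x', -(x₃ + ξ))`, at which the half-space convolution is evaluated in `I_α`. -/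
def lowPt (x : V3) (ξ : ℝ) : V3 := mk3 (x 0) (x 1) (-(x 2 + ξ))

lemma norm_mk3_eq (x y : V3) (ξ : ℝ) :
    ‖mk3 (x 0 - y 0) (x 1 - y 1) (x 2 + y 2 + ξ)‖ = ‖y - lowPt x ξ‖ := by
  simp only [EuclideanSpace.norm_eq, Fin.sum_univ_three, PiLp.sub_apply, lowPt, mk3_apply_zero,
    mk3_apply_one, mk3_apply_two, Real.norm_eq_abs, sq_abs]
  congr 1
  ring

lemma norm_lowPt_sub (x x' : V3) (ξ : ℝ) : ‖lowPt x ξ - lowPt x' ξ‖ = ‖x - x'‖ := by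
  simp only [EuclideanSpace.norm_eq, Fin.sum_univ_three, PiLp.sub_apply, lowPt, mk3_apply_zero,
    mk3_apply_one, mk3_apply_two, Real.norm_eq_abs, sq_abs]
  congr 1
  ring

lemma norm_lowPt_sub' (x : V3) (ξ ξ' : ℝ) : ‖lowPt x ξ - lowPt x ξ'‖ = |ξ - ξ'| := by
  simp only [EuclideanSpace.norm_eq, Fin.sum_univ_three, PiLp.sub_apply, lowPt, mk3_apply_zero,
    mk3_apply_one, mk3_apply_two, Real.norm_eq_abs, sq_abs]
  rw [← Real.sqrt_sq_eq_abs]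
  congr 1
  ring

lemma sub_refl3 (x y : V3) : x - refl3 y = mk3 (x 0 - y 0) (x 1 - y 1) (x 2 + y 2 + 0) := by
  ext i
  fin_cases i <;> simp [refl3]

lemma continuous_coord (i : Fin 3) : Continuous fun x : V3 => x i := by fun_prop

lemma measurableSet_Hplus : MeasurableSet Hplus :=
  (isOpen_lt continuous_const (continuous_coord 2)).measurableSet

lemma measurableSet_Cplus (R : ℝ) : MeasurableSet (Cplus R) := by
  have h0 := (continuous_coord 0).measurable
  have h1 := (continuous_coord 1).measurable
  have h2 := (continuous_coord 2).measurable
  exact (measurableSet_lt ((h0.pow_const 2).add (h1.pow_const 2)) measurable_const).inter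
    ((measurableSet_lt measurable_const h2).inter (measurableSet_lt h2 measurable_const))

lemma measurableSet_layer (ε : ℝ) : MeasurableSet {x : V3 | x 2 ≤ ε} :=
  measurableSet_le (continuous_coord 2).measurable measurable_const

/-- The layer of thickness `ε` in `C₊(1)` lies in the box `[-1,1]² × [0,ε]`. -/
lemma volume_layer_le (ε : ℝ) :
    volume ({x : V3 | x 2 ≤ ε} ∩ Cplus 1) ≤ ENNReal.ofReal (4 * ε) := by
  have hsub : {x : V3 | x 2 ≤ ε} ∩ Cplus 1 ⊆
      (WithLp.ofLp : V3 → (Fin 3 → ℝ)) ⁻¹' Icc ![-1, -1, 0] ![1, 1, ε] := by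
    rintro x ⟨hx, h1, h2, -⟩
    simp only [mem_ofPred_eq] at hx
    have h0 : |x 0| ≤ 1 := abs_le_of_sq_le_sq (by nlinarith [sq_nonneg (x 1)]) (by norm_num)
    have h1 : |x 1| ≤ 1 := abs_le_of_sq_le_sq (by nlinarith [sq_nonneg (x 0)]) (by norm_num)
    rw [abs_le] at h0 h1
    constructor <;> intro i <;> fin_cases i <;> simp <;> linarith
  refine (measure_mono hsub).trans ?_
  rw [(PiLp.volume_preserving_ofLp (Fin 3)).measure_preimage measurableSet_Icc.nullMeasurableSet,
    Real.volume_Icc_pi]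
  simp only [Fin.prod_univ_three]
  rw [← ENNReal.ofReal_mul (by norm_num), ← ENNReal.ofReal_mul (by norm_num)]
  apply ENNReal.ofReal_le_ofReal
  simp
  linarith

/-- Integrating a bound supported in the layer `{x₃ ≤ ε}`; `4^{1/q} ≤ 4` as `q ≥ 1`. -/
lemma eLpNorm_le_of_layer {q ε K : ℝ} (hq : 1 ≤ q) (hε : 0 < ε) (hK : 0 ≤ K) (f : V3 → ℝ)
    (hf : ∀ x ∈ Cplus 1, |f x| ≤ K) (hf0 : ∀ x ∈ Cplus 1, ε < x 2 → f x = 0) :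
    eLpNorm f (ENNReal.ofReal q) (volume.restrict (Cplus 1))
      ≤ ENNReal.ofReal (4 * K * ε ^ (1 / q)) := by
  have hq0 : 0 < q := by linarith
  have hmono : eLpNorm f (ENNReal.ofReal q) (volume.restrict (Cplus 1)) ≤
      eLpNorm ({x : V3 | x 2 ≤ ε}.indicator fun _ => K) (ENNReal.ofReal q)
        (volume.restrict (Cplus 1)) := by
    refine eLpNorm_mono_ae_real ?_
    filter_upwards [ae_restrict_mem (measurableSet_Cplus 1)] with x hx
    by_cases h : x 2 ≤ ε
    · rw [indicator_of_mem (by exact h)]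
      exact hf x hx
    · rw [indicator_of_notMem (by exact h), hf0 x hx (not_le.1 h), norm_zero]
  refine hmono.trans ?_
  rw [eLpNorm_indicator_const (measurableSet_layer ε) (by simpa using hq0) ENNReal.ofReal_ne_top,
    ENNReal.toReal_ofReal hq0.le, Measure.restrict_apply (measurableSet_layer ε),
    Real.enorm_eq_ofReal hK]
  have hq' : 0 ≤ 1 / q := by positivity
  have h4 : (4 : ℝ) ^ (1 / q) ≤ 4 := by
    calc (4 : ℝ) ^ (1 / q) ≤ 4 ^ (1 : ℝ) :=
          Real.rpow_le_rpow_of_exponent_le (by norm_num) ((div_le_one hq0).2 hq)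
      _ = 4 := Real.rpow_one 4
  calc ENNReal.ofReal K * volume ({x : V3 | x 2 ≤ ε} ∩ Cplus 1) ^ (1 / q)
      ≤ ENNReal.ofReal K * ENNReal.ofReal (4 * ε) ^ (1 / q) := by
        gcongr
        exact volume_layer_le ε
    _ = ENNReal.ofReal (K * (4 * ε) ^ (1 / q)) := by
        rw [ENNReal.ofReal_rpow_of_nonneg (by positivity) hq', ENNReal.ofReal_mul hK]
    _ ≤ ENNReal.ofReal (4 * K * ε ^ (1 / q)) := by
        apply ENNReal.ofReal_le_ofReal
        rw [Real.mul_rpow (by norm_num) hε.le]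
        have := mul_le_mul_of_nonneg_left h4 (mul_nonneg hK (Real.rpow_nonneg hε.le (1 / q)))
        linarith

/-! ### The rescaled mollifier -/

lemma IsMollifier.hasCompactSupport {η : V3 → ℝ} (hη : IsMollifier η) : HasCompactSupport η :=
  (isCompact_closedBall (0 : V3) 1).of_isClosed_subset (isClosed_tsupport η) hη.2.1

lemma IsMollifier.mol_eq_of_norm_eq {η : V3 → ℝ} (hη : IsMollifier η) (ε : ℝ) {x y : V3}
    (h : ‖x‖ = ‖y‖) : mol η ε x = mol η ε y := by
  unfold mol
  rw [hη.2.2.1 (ε⁻¹ • x) (ε⁻¹ • y) (by rw [norm_smul, norm_smul, h])]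

lemma IsMollifier.mol_eq_zero {η : V3 → ℝ} (hη : IsMollifier η) {ε : ℝ} (hε : 0 < ε) {x : V3}
    (h : ε < ‖x‖) : mol η ε x = 0 := by
  have hx : ε⁻¹ • x ∉ tsupport η := by
    intro hmem
    have := hη.2.1 hmem
    rw [mem_closedBall_zero_iff, norm_smul, Real.norm_of_nonneg (by positivity),
      inv_mul_le_iff₀ hε, mul_one] at this
    linarith
  rw [mol, image_eq_zero_of_notMem_tsupport hx, mul_zero]

lemma IsMollifier.continuous_mol {η : V3 → ℝ} (hη : IsMollifier η) (ε : ℝ) :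
    Continuous (mol η ε) := by
  have := hη.1.continuous
  unfold mol
  fun_prop

lemma IsMollifier.integrable_mol {η : V3 → ℝ} (hη : IsMollifier η) {ε : ℝ} (hε : 0 < ε) :
    Integrable (mol η ε) := by
  refine (hη.continuous_mol ε).integrable_of_hasCompactSupport ?_
  refine HasCompactSupport.intro (isCompact_closedBall (0 : V3) ε) fun x hx => ?_
  refine hη.mol_eq_zero hε ?_
  simpa using hx

lemma abs_mol_le {η : V3 → ℝ} {B : ℝ} (hB : ∀ x, |η x| ≤ B) {ε : ℝ} (hε : 0 < ε) (x : V3) :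
    |mol η ε x| ≤ (ε ^ 3)⁻¹ * B := by
  rw [mol, abs_mul, abs_of_pos (by positivity)]
  gcongr
  exact hB _

lemma abs_mol_sub_le {η : V3 → ℝ} {L : ℝ} (hL : ∀ x y, |η x - η y| ≤ L * ‖x - y‖) {ε : ℝ}
    (hε : 0 < ε) (x y : V3) :
    |mol η ε x - mol η ε y| ≤ (ε ^ 3)⁻¹ * (L * (ε⁻¹ * ‖x - y‖)) := by
  rw [mol, mol, ← mul_sub, abs_mul, abs_of_pos (by positivity)]
  gcongr
  have := hL (ε⁻¹ • x) (ε⁻¹ • y)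
  rwa [← smul_sub, norm_smul, Real.norm_of_nonneg (by positivity)] at this

/-! ### The half-space convolution -/

/-- The convolution `∫_{ℝ³₊} g(y) η_ε(y - p) dy` of `g` extended by zero to the lower half space. -/
def halfConv (η : V3 → ℝ) (ε : ℝ) (g : V3 → ℝ) (p : V3) : ℝ :=
  ∫ y in Hplus, g y * mol η ε (y - p)

/-- The volume of the unit ball of ℝ³. -/
def ballVol : ℝ := (volume : Measure V3).real (Metric.ball 0 1)

lemma ballVol_nonneg : 0 ≤ ballVol := measureReal_nonneg

lemma volume_real_closedBall (p : V3) {ε : ℝ} (hε : 0 < ε) :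
    (volume : Measure V3).real (Metric.closedBall p ε) = ε ^ 3 * ballVol := by
  rw [Measure.addHaar_real_closedBall _ _ hε.le, ballVol]
  simp

section

variable {η : V3 → ℝ} (hη : IsMollifier η) {ε : ℝ} (hε : 0 < ε) {g : V3 → ℝ} {M : ℝ}
  (hg : Measurable g) (hM : ∀ x, |g x| ≤ M)
include hη hε

lemma mol_sub_eq_zero {y p : V3} (h : y ∉ Metric.closedBall p ε) : mol η ε (y - p) = 0 := by
  refine hη.mol_eq_zero hε ?_
  rw [Metric.mem_closedBall, dist_eq_norm] at h
  exact not_le.1 h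

lemma halfConv_eq_zero {p : V3} (hp : p 2 < -ε) : halfConv η ε g p = 0 := by
  refine setIntegral_eq_zero_of_forall_eq_zero fun y hy => ?_
  have hy' : 0 < y 2 := hy
  rw [hη.mol_eq_zero hε, mul_zero]
  have h := PiLp.norm_apply_le (y - p) 2
  rw [PiLp.sub_apply, Real.norm_eq_abs] at h
  have := le_abs_self (y 2 - p 2)
  linarith

include hM

lemma abs_halfConv_le {B : ℝ} (hB : ∀ x, |η x| ≤ B) (p : V3) :
    |halfConv η ε g p| ≤ B * ballVol * M := by
  have hM0 : 0 ≤ M := (abs_nonneg _).trans (hM 0)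
  have hB0 : 0 ≤ B := (abs_nonneg _).trans (hB 0)
  have hfin : (volume : Measure V3) (Metric.closedBall p ε) < ⊤ := measure_closedBall_lt_top
  have hset : halfConv η ε g p = ∫ y in Hplus ∩ Metric.closedBall p ε, g y * mol η ε (y - p) :=
    (setIntegral_eq_of_subset_of_forall_sdiff_eq_zero measurableSet_Hplus inter_subset_left
      fun y hy => by
        rw [mol_sub_eq_zero hη hε fun h => hy.2 ⟨hy.1, h⟩, mul_zero])
  have hb := norm_setIntegral_le_of_norm_le_const (μ := (volume : Measure V3))
    (s := Hplus ∩ Metric.closedBall p ε) (f := fun y => g y * mol η ε (y - p))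
    (C := M * ((ε ^ 3)⁻¹ * B)) ((measure_mono inter_subset_right).trans_lt hfin) fun y _ => by
      rw [norm_mul]
      exact mul_le_mul (hM y) (abs_mol_le hB hε _) (norm_nonneg _) hM0
  rw [hset]
  refine hb.trans ?_
  calc M * ((ε ^ 3)⁻¹ * B) * (volume : Measure V3).real (Hplus ∩ Metric.closedBall p ε)
      ≤ M * ((ε ^ 3)⁻¹ * B) * (ε ^ 3 * ballVol) := by
        rw [← volume_real_closedBall p hε]
        exact mul_le_mul_of_nonneg_left (measureReal_mono inter_subset_right hfin.ne)
          (by positivity)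
    _ = B * ballVol * M := by field_simp

include hg

lemma integrable_halfConv (p : V3) :
    Integrable (fun y => g y * mol η ε (y - p)) (volume.restrict Hplus) :=
  (((hη.integrable_mol hε).comp_sub_right p).restrict).bdd_mul hg.aestronglyMeasurable
    (Eventually.of_forall hM)

/-- The integrand of the difference lives on the union of two balls of radius `ε`, whence the
factor `2`. -/
lemma abs_halfConv_sub_le {L : ℝ} (hL0 : 0 ≤ L) (hL : ∀ x y, |η x - η y| ≤ L * ‖x - y‖)
    (p p' : V3) :
    |halfConv η ε g p - halfConv η ε g p'| ≤ 2 * L * ballVol * M * ε⁻¹ * ‖p - p'‖ := by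
  have hM0 : 0 ≤ M := (abs_nonneg _).trans (hM 0)
  set U := Metric.closedBall p ε ∪ Metric.closedBall p' ε with hU
  have hfin : (volume : Measure V3) U < ⊤ :=
    measure_union_lt_top measure_closedBall_lt_top measure_closedBall_lt_top
  have hvol : (volume : Measure V3).real (Hplus ∩ U) ≤ 2 * (ε ^ 3 * ballVol) := by
    calc (volume : Measure V3).real (Hplus ∩ U) ≤ (volume : Measure V3).real U :=
          measureReal_mono inter_subset_right hfin.ne
      _ ≤ _ := measureReal_union_le _ _
      _ = 2 * (ε ^ 3 * ballVol) := by
          rw [volume_real_closedBall p hε, volume_real_closedBall p' hε]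
          ring
  have hset : halfConv η ε g p - halfConv η ε g p' =
      ∫ y in Hplus ∩ U, (g y * mol η ε (y - p) - g y * mol η ε (y - p')) := by
    rw [halfConv, halfConv, ← integral_sub (integrable_halfConv hη hε hg hM p)
      (integrable_halfConv hη hε hg hM p')]
    refine (setIntegral_eq_of_subset_of_forall_sdiff_eq_zero measurableSet_Hplus inter_subset_left
      fun y hy => ?_)
    rw [mol_sub_eq_zero hη hε fun h => hy.2 ⟨hy.1, Or.inl h⟩,
      mol_sub_eq_zero hη hε fun h => hy.2 ⟨hy.1, Or.inr h⟩, sub_self]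
  have hb := norm_setIntegral_le_of_norm_le_const (μ := (volume : Measure V3))
    (s := Hplus ∩ U) (f := fun y => g y * mol η ε (y - p) - g y * mol η ε (y - p'))
    (C := M * ((ε ^ 3)⁻¹ * (L * (ε⁻¹ * ‖p - p'‖))))
    ((measure_mono inter_subset_right).trans_lt hfin) fun y _ => by
      rw [← mul_sub, norm_mul]
      refine mul_le_mul (hM y) ?_ (norm_nonneg _) hM0
      have h := abs_mol_sub_le hL hε (y - p) (y - p')
      rwa [sub_sub_sub_cancel_left, norm_sub_rev] at h
  rw [hset]
  refine hb.trans ?_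
  calc M * ((ε ^ 3)⁻¹ * (L * (ε⁻¹ * ‖p - p'‖))) * (volume : Measure V3).real (Hplus ∩ U)
      ≤ M * ((ε ^ 3)⁻¹ * (L * (ε⁻¹ * ‖p - p'‖))) * (2 * (ε ^ 3 * ballVol)) := by gcongr
    _ = 2 * L * ballVol * M * ε⁻¹ * ‖p - p'‖ := by field_simp

lemma continuous_halfConv_lowPt (x : V3) : Continuous fun ξ => halfConv η ε g (lowPt x ξ) := by
  obtain ⟨L, hL⟩ := hη.1.lipschitzWith_of_hasCompactSupport hη.hasCompactSupport (by simp)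
  have hM0 : 0 ≤ M := (abs_nonneg _).trans (hM 0)
  have hV := ballVol_nonneg
  refine (LipschitzWith.of_dist_le_mul
    (K := ⟨2 * L * ballVol * M * ε⁻¹, by positivity⟩) fun ξ ξ' => ?_).continuous
  rw [Real.dist_eq, Real.dist_eq]
  have h := abs_halfConv_sub_le hη hε hg hM L.2
    (fun x y => by simpa [dist_eq_norm] using hL.dist_le_mul x y) (lowPt x ξ) (lowPt x ξ')
  rwa [norm_lowPt_sub'] at h

end

/-! ### Pointwise bounds for `I_α` -/

lemma integral_mk3_eq_halfConv {η : V3 → ℝ} (hη : IsMollifier η) (ε : ℝ) (g : V3 → ℝ) (x : V3)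
    (ξ : ℝ) : (∫ y in Hplus, g y * mol η ε (mk3 (x 0 - y 0) (x 1 - y 1) (x 2 + y 2 + ξ))) =
      halfConv η ε g (lowPt x ξ) := by
  unfold halfConv
  congr 1
  ext y
  rw [hη.mol_eq_of_norm_eq ε (norm_mk3_eq x y ξ)]

lemma integral_refl3_eq_halfConv {η : V3 → ℝ} (hη : IsMollifier η) (ε : ℝ) (g : V3 → ℝ) (x : V3) :
    (∫ y in Hplus, g y * mol η ε (x - refl3 y)) = halfConv η ε g (lowPt x 0) := by
  simp_rw [sub_refl3]
  exact integral_mk3_eq_halfConv hη ε g x 0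

section

variable {η : V3 → ℝ} (hη : IsMollifier η) {ε : ℝ} (hε : 0 < ε) {g : V3 → ℝ} {M : ℝ} {α : ℝ}
include hη hε

/-- For `x₃ ≥ 0` only `ξ ∈ (0, ε]` contributes to `I_α`. -/
lemma Ialpha_eq {x : V3} (hx : 0 ≤ x 2) :
    Ialpha η ε α g x =
      ∫ ξ in Ioc (0 : ℝ) ε, Real.exp (-(α * ξ)) * halfConv η ε g (lowPt x ξ) := by
  unfold Ialpha
  simp_rw [integral_mk3_eq_halfConv hη ε g x]
  refine setIntegral_eq_of_subset_of_forall_sdiff_eq_zero measurableSet_Ioi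
    Ioc_subset_Ioi_self fun ξ hξ => ?_
  have h : ε < ξ := by
    by_contra h
    exact hξ.2 ⟨hξ.1, not_lt.1 h⟩
  rw [halfConv_eq_zero hη hε, mul_zero]
  rw [lowPt, mk3_apply_two]
  linarith

lemma Ialpha_eq_zero {x : V3} (hx : ε < x 2) : Ialpha η ε α g x = 0 := by
  rw [Ialpha_eq hη hε (hε.trans hx).le]
  refine setIntegral_eq_zero_of_forall_eq_zero fun ξ hξ => ?_
  rw [halfConv_eq_zero hη hε, mul_zero]
  rw [lowPt, mk3_apply_two]
  linarith [hξ.1]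

variable (hg : Measurable g) (hM : ∀ x, |g x| ≤ M) (hα : 0 ≤ α)
include hM hα

lemma abs_Ialpha_le {B : ℝ} (hB : ∀ x, |η x| ≤ B) {x : V3} (hx : 0 ≤ x 2) :
    |Ialpha η ε α g x| ≤ B * ballVol * M * ε := by
  rw [Ialpha_eq hη hε hx]
  have hb := norm_setIntegral_le_of_norm_le_const (μ := (volume : Measure ℝ))
    (s := Ioc (0 : ℝ) ε) (f := fun ξ => Real.exp (-(α * ξ)) * halfConv η ε g (lowPt x ξ))
    (C := B * ballVol * M) measure_Ioc_lt_top fun ξ hξ => by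
      rw [norm_mul, Real.norm_of_nonneg (Real.exp_pos _).le]
      have h1 : Real.exp (-(α * ξ)) ≤ 1 :=
        Real.exp_le_one_iff.2 (neg_nonpos.2 (mul_nonneg hα hξ.1.le))
      exact (mul_le_of_le_one_left (norm_nonneg _) h1).trans (abs_halfConv_le hη hε hM hB _)
  rwa [Real.volume_real_Ioc_of_le hε.le, sub_zero] at hb

include hg

lemma abs_Ialpha_sub_le {L : ℝ} (hL0 : 0 ≤ L) (hL : ∀ x y, |η x - η y| ≤ L * ‖x - y‖)
    {x x' : V3} (hx : 0 ≤ x 2) (hx' : 0 ≤ x' 2) :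
    |Ialpha η ε α g x - Ialpha η ε α g x'| ≤ 2 * L * ballVol * M * ‖x - x'‖ := by
  have hint : ∀ z : V3, IntegrableOn
      (fun ξ => Real.exp (-(α * ξ)) * halfConv η ε g (lowPt z ξ)) (Ioc (0 : ℝ) ε) := fun z => by
    have := continuous_halfConv_lowPt hη hε hg hM z
    exact Continuous.integrableOn_Ioc (by fun_prop)
  rw [Ialpha_eq hη hε hx, Ialpha_eq hη hε hx', ← integral_sub (hint x) (hint x')]
  have hb := norm_setIntegral_le_of_norm_le_const (μ := (volume : Measure ℝ))
    (s := Ioc (0 : ℝ) ε) (f := fun ξ => Real.exp (-(α * ξ)) * halfConv η ε g (lowPt x ξ) -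
      Real.exp (-(α * ξ)) * halfConv η ε g (lowPt x' ξ))
    (C := 2 * L * ballVol * M * ε⁻¹ * ‖x - x'‖) measure_Ioc_lt_top fun ξ hξ => by
      rw [← mul_sub, norm_mul, Real.norm_of_nonneg (Real.exp_pos _).le]
      have h1 : Real.exp (-(α * ξ)) ≤ 1 :=
        Real.exp_le_one_iff.2 (neg_nonpos.2 (mul_nonneg hα hξ.1.le))
      have h2 := abs_halfConv_sub_le hη hε hg hM hL0 hL (lowPt x ξ) (lowPt x' ξ)
      rw [norm_lowPt_sub] at h2
      exact (mul_le_of_le_one_left (norm_nonneg _) h1).trans h2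
  rw [Real.volume_real_Ioc_of_le hε.le, sub_zero] at hb
  refine hb.trans (le_of_eq ?_)
  field_simp

lemma abs_pd_Ialpha_le {L : ℝ} (hL0 : 0 ≤ L) (hL : ∀ x y, |η x - η y| ≤ L * ‖x - y‖)
    {x : V3} (hx : 0 < x 2) :
    |pd 2 (Ialpha η ε α g) x| ≤ 2 * L * ballVol * M := by
  have hM0 : 0 ≤ M := (abs_nonneg _).trans (hM 0)
  have hV := ballVol_nonneg
  have hfd : ‖fderiv ℝ (Ialpha η ε α g) x‖ ≤ 2 * L * ballVol * M := by
    refine norm_fderiv_le_of_lip' ℝ (by positivity) ?_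
    filter_upwards [(isOpen_lt continuous_const (continuous_coord 2)).mem_nhds hx] with z hz
    exact abs_Ialpha_sub_le hη hε hg hM hα hL0 hL (le_of_lt hz) hx.le
  have h := (fderiv ℝ (Ialpha η ε α g) x).le_opNorm (e3 2)
  have he : ‖e3 2‖ = 1 := by simp [e3]
  rw [he, mul_one] at h
  exact h.trans hfd

end

lemma pd_Ialpha_eq_zero {η : V3 → ℝ} (hη : IsMollifier η) {ε : ℝ} (hε : 0 < ε) {g : V3 → ℝ}
    {α : ℝ} {x : V3} (hx : ε < x 2) : pd 2 (Ialpha η ε α g) x = 0 := by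
  have h : Ialpha η ε α g =ᶠ[nhds x] fun _ => 0 := by
    filter_upwards [(isOpen_lt continuous_const (continuous_coord 2)).mem_nhds hx] with z hz
    exact Ialpha_eq_zero hη hε hz
  rw [pd, h.fderiv_eq]
  simp

/-! ### The L^q estimates -/

/-- **Lemma 2.2 (ii).**  Let α ≥ 0 and 1 ≤ q < ∞.  There is C = C(q,α,η) such
that for all 0 < ε < 1/100 and g ∈ L^∞(ℝ³₊) (bounded by M):
‖I_α(g)‖_{L^q(C₊(1))} ≤ C ε^{1+1/q} M and
‖∂₃I_α(g)‖_{L^q(C₊(1))} + ‖∫ g(y) η_ε(·-y*) dy‖_{L^q(C₊(1))} ≤ C ε^{1/q} M. -/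
theorem Ialpha_Lq_bounds
    (η : V3 → ℝ) (hη : IsMollifier η)
    (q α : ℝ) (hq : 1 ≤ q) (hα : 0 ≤ α) :
    ∃ C : ℝ, 0 < C ∧
      ∀ ε ∈ Ioo (0:ℝ) (1/100), ∀ (g : V3 → ℝ) (M : ℝ),
        Measurable g → (∀ x : V3, |g x| ≤ M) →
        eLpNorm (Ialpha η ε α g) (ENNReal.ofReal q) (volume.restrict (Cplus 1))
          ≤ ENNReal.ofReal (C * ε ^ (1 + 1/q) * M) ∧
        eLpNorm (fun x => pd 2 (Ialpha η ε α g) x) (ENNReal.ofReal q)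
            (volume.restrict (Cplus 1))
          + eLpNorm (fun x => ∫ y in Hplus, g y * mol η ε (x - refl3 y))
              (ENNReal.ofReal q) (volume.restrict (Cplus 1))
          ≤ ENNReal.ofReal (C * ε ^ (1/q) * M) := by
  obtain ⟨B, hB⟩ := hη.hasCompactSupport.exists_bound_of_continuous hη.1.continuous
  obtain ⟨L, hLip⟩ := hη.1.lipschitzWith_of_hasCompactSupport hη.hasCompactSupport (by simp)
  have hL : ∀ x y, |η x - η y| ≤ L * ‖x - y‖ := fun x y => by
    simpa [dist_eq_norm] using hLip.dist_le_mul x y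
  have hL0 : (0 : ℝ) ≤ L := L.2
  have hB0 : 0 ≤ B := (norm_nonneg _).trans (hB 0)
  have hV := ballVol_nonneg
  refine ⟨4 * (B * ballVol + 2 * L * ballVol + 1), by positivity, ?_⟩
  rintro ε ⟨hε, -⟩ g M hg hM
  have hM0 : 0 ≤ M := (abs_nonneg _).trans (hM 0)
  have hεq : 0 ≤ ε ^ (1 / q) := Real.rpow_nonneg hε.le _
  have hI := eLpNorm_le_of_layer (K := B * ballVol * M * ε) hq hε (by positivity)
    (Ialpha η ε α g) (fun x hx => abs_Ialpha_le hη hε hM hα hB hx.2.1.le)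
    (fun x _ h => Ialpha_eq_zero hη hε h)
  have hD := eLpNorm_le_of_layer (K := 2 * L * ballVol * M) hq hε (by positivity)
    (fun x => pd 2 (Ialpha η ε α g) x)
    (fun x hx => abs_pd_Ialpha_le hη hε hg hM hα hL0 hL hx.2.1)
    (fun x _ h => pd_Ialpha_eq_zero hη hε h)
  have hR := eLpNorm_le_of_layer (K := B * ballVol * M) hq hε (by positivity)
    (fun x => ∫ y in Hplus, g y * mol η ε (x - refl3 y))
    (fun x _ => by
      rw [integral_refl3_eq_halfConv hη]
      exact abs_halfConv_le hη hε hM hB _)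
    (fun x _ h => by
      rw [integral_refl3_eq_halfConv hη]
      refine halfConv_eq_zero hη hε ?_
      rw [lowPt, mk3_apply_two]
      linarith)
  refine ⟨hI.trans (ENNReal.ofReal_le_ofReal ?_), (add_le_add hD hR).trans ?_⟩
  · rw [Real.rpow_add hε, Real.rpow_one]
    have h : 0 ≤ (2 * L * ballVol + 1) * (ε * ε ^ (1 / q) * M) := by positivity
    linarith
  · rw [← ENNReal.ofReal_add (by positivity) (by positivity)]
    apply ENNReal.ofReal_le_ofReal
    have h : 0 ≤ ε ^ (1 / q) * M := by positivity
    linarith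

end
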